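/- Let v be quasi-definite with SMOP (P_n), recurrence coefficients (a_n, b_n) and associated first-kind polynomials (P^{(1)}_n); let v̂ with (x−c)v̂ = v be quasi-definite with SMOP (P̂_n), recurrence coefficients (â_n, b̂_n), Jacobi matrix Ĵ, and assume v_0·P^{(1)}_{n−1}(c) + v̂_0·P_n(c) ≠ 0 and P̂_n(c) ≠ 0 for all n. Let β_n = −P̂_{n+1}(c)/P̂_n(c) and ℓ_n = −(v_0·P^{(1)}_{n−1}(c) + v̂_0·P_n(c))/(v_0·P^{(1)}_{n−2}(c) + v̂_0·P_{n−1}(c)). Let J_α be the Jacobi matrix of the co-recursive sequence S_n = P_n + (v_0/v̂_0)P^{(1)}_{n−1} (diagonal (b_0 + α, b_1, b_2, …) with α = −v_0/v̂_0, subdiagonal (a_1, a_2, …), superdiagonal 1), and let Ĵ^{(1)} be the Jacobi matrix with diagonal b̂_{n+1}, subdiagonal â_{n+2}, superdiagonal 1 (the Jacobi matrix of (P̂^{(1)}_n)). Define L̂ as the unit lower bidiagonal matrix with subdiagonal entries β_1, β_2, β_3, … and Û as the upper bidiagonal matrix with diagonal entries ℓ_1, ℓ_2, ℓ_3, … and superdiagonal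 1. Then, entrywise, J_α − cI = L̂·Û and Ĵ^{(1)} − cI = Û·L̂. -/

import Mathlib

open Polynomial

noncomputable section

/-- Apply a linear functional (identified with its moment sequence) to a polynomial:
`⟨u, p⟩ = Σ_k c_k u_k` for `p = Σ_k c_k x^k`. -/
def fapply (u : ℕ → ℂ) (p : Polynomial ℂ) : ℂ := p.sum fun k ck => ck * u k

/-- `P` is the sequence of monic orthogonal polynomials (SMOP) of the functional `u`. -/
def IsSMOP (u : ℕ → ℂ) (P : ℕ → Polynomial ℂ) : Prop :=
  (∀ n, (P n).Monic) ∧ (∀ n, (P n).natDegree = n) ∧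
    (∀ n m, n ≠ m → fapply u (P n * P m) = 0) ∧ (∀ n, fapply u (P n * P n) ≠ 0)

/-- A functional is quasi-definite iff it admits a SMOP. -/
def IsQuasiDefinite (u : ℕ → ℂ) : Prop := ∃ P, IsSMOP u P

/-- Three term recurrence relation `x P_n = P_{n+1} + b_n P_n + a_n P_{n-1}`,
with `P_{-1} = 0`, `P_0 = 1`. -/
def HasTTRR (P : ℕ → Polynomial ℂ) (a b : ℕ → ℂ) : Prop :=
  P 0 = 1 ∧ X * P 0 = P 1 + C (b 0) * P 0 ∧
    ∀ n, 1 ≤ n → X * P n = P (n + 1) + C (b n) * P n + C (a n) * P (n - 1)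

/-- Wronskian `W(p,q)(x) = p(x) q'(x) - p'(x) q(x)`. -/
def Wr (p q : Polynomial ℂ) (x : ℂ) : ℂ :=
  p.eval x * (derivative q).eval x - (derivative p).eval x * q.eval x

/-- The monic Jacobi matrix with diagonal `b`, superdiagonal `1` and subdiagonal
entries `J_{n+1,n} = a_{n+1}`. -/
def jacobi (a b : ℕ → ℂ) (i j : ℕ) : ℂ :=
  if i = j then b i else if j = i + 1 then 1 else if i = j + 1 then a i else 0

/-- Entrywise product of semi-infinite (banded) matrices; the sum has finite support. -/
def mprod (A B : ℕ → ℕ → ℂ) (i j : ℕ) : ℂ := ∑' k, A i k * B k j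

/-- `w` is the moment sequence of the inverse functional `u⁻¹`:
the convolution of the moments of `u` and `w` is `(1,0,0,…)`. -/
def IsInverseMoments (u w : ℕ → ℂ) : Prop :=
  ∀ n, ∑ k ∈ Finset.range (n + 1), u k * w (n - k) = if n = 0 then 1 else 0

/-- Apply a functional `u` to the second (outer) variable `y` of a bivariate polynomial
`D = Σ_k q_k(x) y^k`, giving `Σ_k u_k q_k(x)`. -/
def fapplyY (u : ℕ → ℂ) (D : Polynomial (Polynomial ℂ)) : Polynomial ℂ :=
  D.sum fun k q => u k • q

/-- `P^{(1)}_{n-1}`, with the convention `P^{(1)}_{-1} = 0`. -/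
def P1prev (P1 : ℕ → Polynomial ℂ) (n : ℕ) : Polynomial ℂ :=
  if n = 0 then 0 else P1 (n - 1)

/-!
The identity `⟨v̂, (x - c) p⟩ = ⟨v, p⟩` makes `P̂_{n+1}` orthogonal for `v`, and `(x - c) P_n`
orthogonal for `v̂`, to all polynomials of degree less than `n`. A monic polynomial of degree
`n + 1` with that property differs from the orthogonal one by a multiple of its predecessor, so
`P̂_{n+1} = P_{n+1} + ℓ_{n+1} P_n` and `(x - c) P_n = P̂_{n+1} + β_n P̂_n`. The first coefficient
is found by applying `v̂`, which annihilates `P̂_{n+1}`, and the second by evaluating at `c`.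
Substituting either relation into the other and comparing with the three term recurrences
expresses the coefficients of both Jacobi matrices through `ℓ` and `β`. In the corner,
`b_0 - c = ℓ_1 + β_0` while `L̂ Û` contains only `ℓ_1`; the missing `β_0 = v_0 / v̂_0` is the
co-recursive perturbation.
-/

section MonicOrthogonal

variable {R : Type*} [CommRing R]

/-- `P` is the sequence of monic orthogonal polynomials of the linear functional `L`: the notion
`IsSMOP` over an arbitrary commutative ring, the functional being a linear map rather than a
moment sequence. -/
structure IsMonicOrthogonal (L : R[X] →ₗ[R] R) (P : ℕ → R[X]) : Prop where
  monic : ∀ n, (P n).Monic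
  natDegree_eq : ∀ n, (P n).natDegree = n
  orthogonal : ∀ n m, n ≠ m → L (P n * P m) = 0
  norm_ne_zero : ∀ n, L (P n * P n) ≠ 0

theorem map_C_mul (L : R[X] →ₗ[R] R) (r : R) (p : R[X]) : L (C r * p) = r * L p := by
  rw [← smul_eq_C_mul, map_smul, smul_eq_mul]

theorem degree_sub_C_coeff_mul_lt {p q : R[X]} {n : ℕ} (hp : p.Monic) (hpn : p.natDegree = n)
    (hq : q.natDegree ≤ n) : (q - C (q.coeff n) * p).degree < n := by
  subst hpn
  refine (degree_lt_iff_coeff_zero _ _).2 fun k hk => ?_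
  rw [coeff_sub, coeff_C_mul]
  rcases hk.eq_or_lt with rfl | hlt
  · rw [hp.coeff_natDegree, mul_one, sub_self]
  · rw [coeff_eq_zero_of_natDegree_lt (hq.trans_lt hlt), coeff_eq_zero_of_natDegree_lt hlt,
      mul_zero, sub_self]

theorem C_mul_add_C_mul_inj {p q : R[X]} (hp : p.Monic) (hq : q.Monic)
    (hdeg : q.natDegree < p.natDegree) {x y x' y' : R} :
    C x * p + C y * q = C x' * p + C y' * q ↔ x = x' ∧ y = y' := by
  refine ⟨fun h => ?_, fun ⟨hx, hy⟩ => by rw [hx, hy]⟩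
  have hx : x = x' := by
    simpa [hp.coeff_natDegree, coeff_eq_zero_of_natDegree_lt hdeg]
      using congrArg (coeff · p.natDegree) h
  subst hx
  refine ⟨rfl, ?_⟩
  simpa [hq.coeff_natDegree] using congrArg (coeff · q.natDegree) h

namespace IsMonicOrthogonal

variable {L : R[X] →ₗ[R] R} {P : ℕ → R[X]}

theorem degree_eq (hP : IsMonicOrthogonal L P) (n : ℕ) : (P n).degree = n := by
  have hne : P n ≠ 0 := fun h => hP.norm_ne_zero n (by rw [h, mul_zero, map_zero])
  rw [degree_eq_natDegree hne, hP.natDegree_eq]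

theorem map_mul_eq_zero (hP : IsMonicOrthogonal L P) {n : ℕ} {q : R[X]} (hq : q.degree < n) :
    L (P n * q) = 0 := by
  let S : Polynomial.Sequence R := ⟨P, hP.degree_eq⟩
  have hspan : Submodule.span R (S '' Set.Iio n) = degreeLT R n :=
    S.span_degreeLT fun i _ => (hP.monic i).leadingCoeff.symm ▸ isUnit_one
  have hker : degreeLT R n ≤ (L ∘ₗ LinearMap.mulLeft R (P n)).ker := by
    rw [← hspan, Submodule.span_le]
    rintro _ ⟨m, hm, rfl⟩
    exact hP.orthogonal n m (Set.mem_Iio.1 hm).ne'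
  exact hker (mem_degreeLT.2 hq)

theorem map_succ_eq_zero (hP : IsMonicOrthogonal L P) (n : ℕ) : L (P (n + 1)) = 0 := by
  have h1 : (1 : R[X]).degree < (n + 1 : ℕ) :=
    degree_one_le.trans_lt (by exact_mod_cast n.succ_pos)
  simpa using hP.map_mul_eq_zero h1

theorem map_mul_eq_coeff_mul (hP : IsMonicOrthogonal L P) {n : ℕ} {q : R[X]}
    (hq : q.natDegree ≤ n) : L (P n * q) = q.coeff n * L (P n * P n) := by
  have hrest := hP.map_mul_eq_zero
    (degree_sub_C_coeff_mul_lt (hP.monic n) (hP.natDegree_eq n) hq)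
  rwa [mul_sub, mul_left_comm, map_sub, map_C_mul, sub_eq_zero] at hrest

variable [NoZeroDivisors R]

theorem eq_zero_of_forall_map_mul_eq_zero (hP : IsMonicOrthogonal L P) {n : ℕ} {p : R[X]}
    (hp : p.degree < n) (horth : ∀ q : R[X], q.degree < n → L (p * q) = 0) : p = 0 := by
  by_contra hne
  have hm : (P p.natDegree).degree < n := by
    rwa [hP.degree_eq, ← degree_eq_natDegree hne]
  have hzero := horth _ hm
  rw [mul_comm, hP.map_mul_eq_coeff_mul le_rfl] at hzero
  exact mul_ne_zero (leadingCoeff_ne_zero.2 hne) (hP.norm_ne_zero _) hzero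

theorem eq_C_mul_of_forall_map_mul_eq_zero (hP : IsMonicOrthogonal L P) {n : ℕ} {p : R[X]}
    (hp : p.natDegree ≤ n) (horth : ∀ q : R[X], q.degree < n → L (p * q) = 0) :
    p = C (p.coeff n) * P n := by
  have hdeg := degree_sub_C_coeff_mul_lt (hP.monic n) (hP.natDegree_eq n) hp
  refine sub_eq_zero.1 <| hP.eq_zero_of_forall_map_mul_eq_zero hdeg fun q hq => ?_
  rw [sub_mul, mul_assoc, map_sub, map_C_mul, horth q hq, hP.map_mul_eq_zero hq, mul_zero,
    sub_self]

theorem exists_eq_add_C_mul (hP : IsMonicOrthogonal L P) {n : ℕ} {Q : R[X]} (hQ : Q.Monic)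
    (hdeg : Q.natDegree = n + 1) (horth : ∀ q : R[X], q.degree < n → L (Q * q) = 0) :
    ∃ t, Q = P (n + 1) + C t * P n := by
  have hlt : (Q - P (n + 1)).degree < (n + 1 : ℕ) := by
    simpa [← hdeg, hQ.coeff_natDegree] using
      degree_sub_C_coeff_mul_lt (hP.monic (n + 1)) (hP.natDegree_eq (n + 1)) hdeg.le
  have hle : (Q - P (n + 1)).natDegree ≤ n :=
    natDegree_le_of_degree_le (Order.lt_succ_iff.1 hlt)
  refine ⟨_, sub_eq_iff_eq_add'.1 <|
    hP.eq_C_mul_of_forall_map_mul_eq_zero hle fun q hq => ?_⟩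
  have hq' : q.degree < (n + 1 : ℕ) := hq.trans (by exact_mod_cast n.lt_succ_self)
  rw [sub_mul, map_sub, horth q hq, hP.map_mul_eq_zero hq', sub_zero]

end IsMonicOrthogonal

end MonicOrthogonal

section Geronimus

variable {K : Type*} [Field K] {L Lh : K[X] →ₗ[K] K} {P Ph : ℕ → K[X]} {c : K}

namespace IsMonicOrthogonal

theorem eq_add_C_mul_of_map_eq_zero (hP : IsMonicOrthogonal L P) {n : ℕ} {Q : K[X]}
    (hQ : Q.Monic) (hdeg : Q.natDegree = n + 1)
    (horth : ∀ q : K[X], q.degree < n → L (Q * q) = 0)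
    (φ : K[X] →ₗ[K] K) (hφQ : φ Q = 0) (hφP : φ (P n) ≠ 0) :
    Q = P (n + 1) + C (-(φ (P (n + 1)) / φ (P n))) * P n := by
  obtain ⟨t, ht⟩ := hP.exists_eq_add_C_mul hQ hdeg horth
  have hφt : φ (P (n + 1)) + t * φ (P n) = 0 := by
    rw [← hφQ, ht, map_add, map_C_mul]
  have ht' : t = -(φ (P (n + 1)) / φ (P n)) := by
    rw [← neg_div, eq_div_iff hφP]
    linear_combination hφt
  rwa [ht'] at ht

theorem geronimus_eq_add_C_mul (hP : IsMonicOrthogonal L P) (hPh : IsMonicOrthogonal Lh Ph)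
    (hger : ∀ p, Lh ((X - C c) * p) = L p) {n : ℕ} (hn : Lh (P n) ≠ 0) :
    Ph (n + 1) = P (n + 1) + C (-(Lh (P (n + 1)) / Lh (P n))) * P n := by
  refine hP.eq_add_C_mul_of_map_eq_zero (hPh.monic _) (hPh.natDegree_eq _) (fun q hq => ?_) Lh
    (hPh.map_succ_eq_zero n) hn
  have hdeg : ((X - C c) * q).degree < ((n + 1 : ℕ) : WithBot ℕ) := by
    rw [degree_mul, degree_X_sub_C, add_comm, Nat.cast_succ]
    exact WithBot.add_lt_add_right WithBot.one_ne_bot hq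
  rw [← hger, mul_left_comm, hPh.map_mul_eq_zero hdeg]

theorem X_sub_C_mul_eq_geronimus_add_C_mul (hP : IsMonicOrthogonal L P)
    (hPh : IsMonicOrthogonal Lh Ph) (hger : ∀ p, Lh ((X - C c) * p) = L p) {n : ℕ}
    (hn : (Ph n).eval c ≠ 0) :
    (X - C c) * P n = Ph (n + 1) + C (-((Ph (n + 1)).eval c / (Ph n).eval c)) * Ph n := by
  refine hPh.eq_add_C_mul_of_map_eq_zero ((monic_X_sub_C c).mul (hP.monic n)) ?_ (fun q hq => ?_)
    (leval c) (by simp) hn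
  · rw [(monic_X_sub_C c).natDegree_mul (hP.monic n), natDegree_X_sub_C, hP.natDegree_eq,
      add_comm]
  · rw [mul_assoc, hger, hP.map_mul_eq_zero hq]

end IsMonicOrthogonal

end Geronimus

section Recurrence

variable {P Ph : ℕ → ℂ[X]} {a b ah bh β d : ℕ → ℂ} {c : ℂ} {L Lh : ℂ[X] →ₗ[ℂ] ℂ}

namespace HasTTRR

theorem X_mul_succ (h : HasTTRR P a b) (n : ℕ) :
    X * P (n + 1) = P (n + 2) + C (b (n + 1)) * P (n + 1) + C (a (n + 1)) * P n :=
  h.2.2 (n + 1) n.succ_pos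

theorem monic_and_natDegree_eq (h : HasTTRR P a b) (n : ℕ) :
    (P n).Monic ∧ (P n).natDegree = n := by
  induction n using Nat.twoStepInduction with
  | zero => simp [h.1, monic_one]
  | one =>
    have hP1 : P 1 = X - C (b 0) := by linear_combination (X - C (b 0)) * h.1 - h.2.1
    exact hP1 ▸ ⟨monic_X_sub_C _, natDegree_X_sub_C _⟩
  | more n ih ih' =>
    have hrec : P (n + 2) = (X - C (b (n + 1))) * P (n + 1) - C (a (n + 1)) * P n := by
      linear_combination -h.X_mul_succ n
    have hmonic := (monic_X_sub_C (b (n + 1))).mul ih'.1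
    have hdeg : ((X - C (b (n + 1))) * P (n + 1)).natDegree = n + 2 := by
      rw [(monic_X_sub_C _).natDegree_mul ih'.1, natDegree_X_sub_C, ih'.2]
      ring
    have hlt : (C (a (n + 1)) * P n).natDegree < ((X - C (b (n + 1))) * P (n + 1)).natDegree := by
      have := natDegree_C_mul_le (a (n + 1)) (P n)
      omega
    rw [hrec, natDegree_sub_eq_left_of_natDegree_lt hlt, hdeg]
    exact ⟨hmonic.sub_of_left (degree_lt_degree hlt), rfl⟩

theorem coeff_succ_eq (h : HasTTRR P a b) {n : ℕ} {a' b' : ℂ}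
    (h' : X * P (n + 1) = P (n + 2) + C b' * P (n + 1) + C a' * P n) :
    b (n + 1) = b' ∧ a (n + 1) = a' := by
  obtain ⟨hmonic, hdeg⟩ := h.monic_and_natDegree_eq n
  obtain ⟨hmonic', hdeg'⟩ := h.monic_and_natDegree_eq (n + 1)
  refine (C_mul_add_C_mul_inj hmonic' hmonic (by omega)).1 ?_
  linear_combination h' - h.X_mul_succ n

theorem X_mul_P1prev_succ {P1 : ℕ → ℂ[X]}
    (h : HasTTRR P1 (fun n => a (n + 1)) (fun n => b (n + 1))) (n : ℕ) :
    X * P1prev P1 (n + 1) =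
      P1prev P1 (n + 2) + C (b (n + 1)) * P1prev P1 (n + 1) + C (a (n + 1)) * P1prev P1 n := by
  cases n with
  | zero => simpa [P1prev] using h.2.1
  | succ n => simpa [P1prev] using h.X_mul_succ n

theorem map_eq_of_geronimus (h : HasTTRR P a b) (hP : IsMonicOrthogonal L P) {P1 : ℕ → ℂ[X]}
    (hP1 : HasTTRR P1 (fun n => a (n + 1)) (fun n => b (n + 1)))
    (hger : ∀ p, Lh ((X - C c) * p) = L p) (n : ℕ) :
    Lh (P n) = L 1 * (P1prev P1 n).eval c + Lh 1 * (P n).eval c := by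
  have map_X_mul (p : ℂ[X]) : Lh (X * p) = L p + c * Lh p := by
    rw [← hger, ← map_C_mul, ← map_add, sub_mul, sub_add_cancel]
  induction n using Nat.twoStepInduction with
  | zero => simp [P1prev, h.1]
  | one =>
    have hLh := map_X_mul (P 0)
    rw [h.2.1, map_add, map_C_mul, h.1] at hLh
    have hc := congrArg (eval c) h.2.1
    simp only [h.1, eval_add, eval_mul, eval_X, eval_C, eval_one] at hc
    simp only [P1prev, one_ne_zero, if_false, Nat.sub_self, hP1.1, eval_one]
    linear_combination hLh + Lh 1 * hc
  | more n ih ih' =>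
    have hLh := map_X_mul (P (n + 1))
    rw [h.X_mul_succ, map_add, map_add, map_C_mul, map_C_mul, hP.map_succ_eq_zero] at hLh
    have hc := congrArg (eval c) (h.X_mul_succ n)
    have hc1 := congrArg (eval c) (hP1.X_mul_P1prev_succ n)
    simp only [eval_add, eval_mul, eval_X, eval_C] at hc hc1
    linear_combination hLh + (c - b (n + 1)) * ih' - a (n + 1) * ih + L 1 * hc1 + Lh 1 * hc

theorem coeff_sub_eq_of_connection (h : HasTTRR P a b)
    (hconn : ∀ n, Ph (n + 1) = P (n + 1) + C (d n) * P n)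
    (hchr : ∀ n, (X - C c) * P n = Ph (n + 1) + C (β n) * Ph n) (n : ℕ) :
    b (n + 1) - c = d (n + 1) + β (n + 1) ∧ a (n + 1) = β (n + 1) * d n := by
  have hrec : X * P (n + 1) =
      P (n + 2) + C (d (n + 1) + β (n + 1) + c) * P (n + 1) + C (β (n + 1) * d n) * P n := by
    simp only [C_add, C_mul]
    linear_combination hchr (n + 1) + hconn (n + 1) + C (β (n + 1)) * hconn n
  obtain ⟨hb, ha⟩ := h.coeff_succ_eq hrec
  exact ⟨by rw [hb, add_sub_cancel_right], ha⟩

theorem geronimus_coeff_sub_eq_of_connection (h : HasTTRR Ph ah bh)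
    (hconn : ∀ n, Ph (n + 1) = P (n + 1) + C (d n) * P n)
    (hchr : ∀ n, (X - C c) * P n = Ph (n + 1) + C (β n) * Ph n) (n : ℕ) :
    bh (n + 1) - c = d n + β (n + 1) ∧ ah (n + 1) = d n * β n := by
  have hrec : X * Ph (n + 1) =
      Ph (n + 2) + C (d n + β (n + 1) + c) * Ph (n + 1) + C (d n * β n) * Ph n := by
    simp only [C_add, C_mul]
    linear_combination hchr (n + 1) + C (d n) * hchr n + (X - C c) * hconn n
  obtain ⟨hb, ha⟩ := h.coeff_succ_eq hrec
  exact ⟨by rw [hb, add_sub_cancel_right], ha⟩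

theorem coeff_zero_sub_eq_of_connection (h : HasTTRR P a b) (hPh : IsMonicOrthogonal Lh Ph)
    (hger : ∀ p, Lh ((X - C c) * p) = L p) {d₀ β₀ : ℂ}
    (hconn : Ph 1 = P 1 + C d₀ * P 0) (hchr : (X - C c) * P 0 = Ph 1 + C β₀ * Ph 0) :
    b 0 - L 1 / Lh 1 - c = d₀ := by
  have hPh0 : Ph 0 = 1 := (hPh.monic 0).natDegree_eq_zero.1 (hPh.natDegree_eq 0)
  have hβ₀ : L 1 / Lh 1 = β₀ := by
    have hLh1 : Lh 1 ≠ 0 := by simpa [hPh0] using hPh.norm_ne_zero 0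
    rw [div_eq_iff hLh1, ← hger, ← h.1, hchr, map_add, hPh.map_succ_eq_zero, zero_add,
      map_C_mul, hPh0, h.1]
  have hrec := h.2.1
  rw [h.1] at hconn hchr hrec
  rw [hPh0] at hchr
  refine C_injective ?_
  simp only [hβ₀, C_sub]
  linear_combination hconn + hchr - hrec

end HasTTRR

end Recurrence

section Matrices

/-- The unit lower bidiagonal semi-infinite matrix with subdiagonal entries `β 1, β 2, …`; the
value `β 0` does not occur. -/
def unitLowerBidiagonal (β : ℕ → ℂ) (i j : ℕ) : ℂ :=
  if i = j then 1 else if i = j + 1 then β i else 0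

/-- The upper bidiagonal semi-infinite matrix with diagonal `d` and superdiagonal `1`. -/
def upperBidiagonal (d : ℕ → ℂ) (i j : ℕ) : ℂ :=
  if j = i then d i else if j = i + 1 then 1 else 0

theorem jacobi_sub_scalar_eq {a a' b b' : ℕ → ℂ} {c : ℂ} (ha : ∀ n, a (n + 1) = a' (n + 1))
    (hb : ∀ n, b n - c = b' n) (i j : ℕ) :
    jacobi a b i j - (if i = j then c else 0) = jacobi a' b' i j := by
  unfold jacobi
  split_ifs with _ _ hij
  · exact hb i
  · exact sub_zero 1
  · rw [hij, ha, sub_zero]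
  · exact sub_zero 0

theorem mprod_upperBidiagonal (d : ℕ → ℂ) (A : ℕ → ℕ → ℂ) (i j : ℕ) :
    mprod (upperBidiagonal d) A i j = d i * A i j + A (i + 1) j := by
  rw [mprod, tsum_eq_sum (s := {i, i + 1}), Finset.sum_pair i.succ_ne_self.symm]
  · simp [upperBidiagonal]
  · intro k hk
    simp only [Finset.mem_insert, Finset.mem_singleton, not_or] at hk
    simp [upperBidiagonal, hk]

theorem mprod_unitLowerBidiagonal_zero (β : ℕ → ℂ) (A : ℕ → ℕ → ℂ) (j : ℕ) :
    mprod (unitLowerBidiagonal β) A 0 j = A 0 j := by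
  rw [mprod, tsum_eq_single 0]
  · simp [unitLowerBidiagonal]
  · intro k hk
    simp [unitLowerBidiagonal, hk.symm]

theorem mprod_unitLowerBidiagonal_succ (β : ℕ → ℂ) (A : ℕ → ℕ → ℂ) (i j : ℕ) :
    mprod (unitLowerBidiagonal β) A (i + 1) j = β (i + 1) * A i j + A (i + 1) j := by
  rw [mprod, tsum_eq_sum (s := {i, i + 1}), Finset.sum_pair i.succ_ne_self.symm]
  · simp [unitLowerBidiagonal]
  · intro k hk
    simp only [Finset.mem_insert, Finset.mem_singleton, not_or] at hk
    simp [unitLowerBidiagonal, Ne.symm hk.1, Ne.symm hk.2]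

theorem mprod_upperBidiagonal_unitLowerBidiagonal (d β : ℕ → ℂ) :
    mprod (upperBidiagonal d) (unitLowerBidiagonal β) =
      jacobi (fun n => d n * β n) (fun n => d n + β (n + 1)) := by
  ext i j
  rw [mprod_upperBidiagonal]
  unfold unitLowerBidiagonal jacobi
  grind

theorem mprod_unitLowerBidiagonal_upperBidiagonal (β d : ℕ → ℂ) :
    mprod (unitLowerBidiagonal β) (upperBidiagonal d) =
      jacobi (fun n => β n * d (n - 1)) (fun n => d n + if n = 0 then 0 else β n) := by
  ext i j
  cases i with
  | zero =>
    rw [mprod_unitLowerBidiagonal_zero]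
    unfold upperBidiagonal jacobi
    grind
  | succ i =>
    rw [mprod_unitLowerBidiagonal_succ]
    unfold upperBidiagonal jacobi
    grind

end Matrices

section Factorization

variable {P Ph : ℕ → ℂ[X]} {a b ah bh d β : ℕ → ℂ} {c : ℂ} {L Lh : ℂ[X] →ₗ[ℂ] ℂ}

namespace HasTTRR

theorem corecursive_jacobi_sub_scalar_eq_mprod (h : HasTTRR P a b)
    (hPh : IsMonicOrthogonal Lh Ph) (hger : ∀ p, Lh ((X - C c) * p) = L p)
    (hconn : ∀ n, Ph (n + 1) = P (n + 1) + C (d n) * P n)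
    (hchr : ∀ n, (X - C c) * P n = Ph (n + 1) + C (β n) * Ph n) (i j : ℕ) :
    jacobi a (fun n => b n + if n = 0 then -(L 1) / Lh 1 else 0) i j - (if i = j then c else 0) =
      mprod (unitLowerBidiagonal β) (upperBidiagonal d) i j := by
  have hcoeff := h.coeff_sub_eq_of_connection hconn hchr
  rw [mprod_unitLowerBidiagonal_upperBidiagonal]
  refine jacobi_sub_scalar_eq (fun n => (hcoeff n).2) (fun n => ?_) i j
  rcases n with _ | n
  · simpa [neg_div, sub_eq_add_neg] using
      h.coeff_zero_sub_eq_of_connection hPh hger (hconn 0) (hchr 0)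
  · simpa using (hcoeff n).1

theorem associated_jacobi_sub_scalar_eq_mprod (h : HasTTRR Ph ah bh)
    (hconn : ∀ n, Ph (n + 1) = P (n + 1) + C (d n) * P n)
    (hchr : ∀ n, (X - C c) * P n = Ph (n + 1) + C (β n) * Ph n) (i j : ℕ) :
    jacobi (fun n => ah (n + 1)) (fun n => bh (n + 1)) i j - (if i = j then c else 0) =
      mprod (upperBidiagonal d) (unitLowerBidiagonal β) i j := by
  have hcoeff := h.geronimus_coeff_sub_eq_of_connection hconn hchr
  rw [mprod_upperBidiagonal_unitLowerBidiagonal]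
  exact jacobi_sub_scalar_eq (fun n => (hcoeff (n + 1)).2) (fun n => (hcoeff n).1) i j

end HasTTRR

end Factorization

section Moments

/-- The linear functional on polynomials whose `n`-th moment is `u n`; it is the linear map
underlying `fapply`. -/
def momentFunctional {R : Type*} [CommSemiring R] (u : ℕ → R) : R[X] →ₗ[R] R :=
  lsum fun n => LinearMap.toSpanSingleton R R (u n)

theorem momentFunctional_X_pow {R : Type*} [CommSemiring R] (u : ℕ → R) (n : ℕ) :
    momentFunctional u (X ^ n) = u n := by
  simp [momentFunctional, lsum_apply, X_pow_eq_monomial, sum_monomial_index]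

theorem momentFunctional_one {R : Type*} [CommSemiring R] (u : ℕ → R) :
    momentFunctional u 1 = u 0 := by
  rw [← pow_zero X, momentFunctional_X_pow]

theorem momentFunctional_X_sub_C_mul {R : Type*} [CommRing R] {v vh : ℕ → R} {c : R}
    (hger : ∀ n, vh (n + 1) - c * vh n = v n) (p : R[X]) :
    momentFunctional vh ((X - C c) * p) = momentFunctional v p := by
  induction p using Polynomial.induction_on' with
  | add p q hp hq => rw [mul_add, map_add, map_add, hp, hq]
  | monomial n r =>
    rw [← C_mul_X_pow_eq_monomial, mul_left_comm, map_C_mul, map_C_mul, sub_mul, ← pow_succ',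
      map_sub, map_C_mul]
    simp only [momentFunctional_X_pow, hger]

theorem IsSMOP.isMonicOrthogonal {u : ℕ → ℂ} {P : ℕ → ℂ[X]} (h : IsSMOP u P) :
    IsMonicOrthogonal (momentFunctional u) P :=
  ⟨h.1, h.2.1, h.2.2.1, h.2.2.2⟩

end Moments

/-- `J_α - cI = L̂·Û` and `Ĵ^{(1)} - cI = Û·L̂`, where `L̂` is unit lower
bidiagonal with subdiagonal `β_1, β_2, …` and `Û` is upper bidiagonal with diagonal
`ℓ_1, ℓ_2, …` and superdiagonal `1`. -/
theorem stmt_19 (v : ℕ → ℂ) (c : ℂ) (P : ℕ → Polynomial ℂ) (hP : IsSMOP v P)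
    (a b : ℕ → ℂ) (hrec : HasTTRR P a b) (ha : ∀ n, 1 ≤ n → a n ≠ 0)
    (P1 : ℕ → Polynomial ℂ)
    (hP1 : HasTTRR P1 (fun n => a (n + 1)) (fun n => b (n + 1)))
    (vh : ℕ → ℂ) (hger : ∀ n, vh (n + 1) - c * vh n = v n) (hvh0 : vh 0 ≠ 0)
    (Ph : ℕ → Polynomial ℂ) (hPh : IsSMOP vh Ph)
    (ah bh : ℕ → ℂ) (hrech : HasTTRR Ph ah bh)
    (hcond : ∀ n, 1 ≤ n → v 0 * (P1 (n - 1)).eval c + vh 0 * (P n).eval c ≠ 0)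
    (hPhc : ∀ n, (Ph n).eval c ≠ 0)
    (ell beta : ℕ → ℂ)
    (hell : ∀ n, 1 ≤ n → ell n =
      -(v 0 * (P1prev P1 n).eval c + vh 0 * (P n).eval c)
        / (v 0 * (P1prev P1 (n - 1)).eval c + vh 0 * (P (n - 1)).eval c))
    (hbeta : ∀ n, beta n = -((Ph (n + 1)).eval c / (Ph n).eval c))
    (Lh Uh : ℕ → ℕ → ℂ)
    (hLh : ∀ i j, Lh i j = if i = j then 1 else if i = j + 1 then beta i else 0)
    (hUh : ∀ i j, Uh i j = if j = i then ell (i + 1) else if j = i + 1 then 1 else 0)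
    (Jα : ℕ → ℕ → ℂ)
    (hJα : ∀ i j, Jα i j =
      jacobi a (fun n => b n + if n = 0 then -(v 0) / vh 0 else 0) i j) :
    (∀ i j, (Jα i j - if i = j then c else 0) = mprod Lh Uh i j)
    ∧ (∀ i j, (jacobi (fun n => ah (n + 1)) (fun n => bh (n + 1)) i j
        - if i = j then c else 0) = mprod Uh Lh i j) := by
  have hO := hP.isMonicOrthogonal
  have hOh := hPh.isMonicOrthogonal
  have hL := momentFunctional_X_sub_C_mul hger
  have hD (n : ℕ) := hrec.map_eq_of_geronimus hO hP1 hL n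
  simp only [momentFunctional_one] at hD
  have hD_ne : ∀ n, momentFunctional vh (P n) ≠ 0
    | 0 => by rwa [hrec.1, momentFunctional_one]
    | n + 1 => by simpa [hD, P1prev] using hcond (n + 1) n.succ_pos
  have hconn (n : ℕ) : Ph (n + 1) = P (n + 1) + C (ell (n + 1)) * P n := by
    rw [hell (n + 1) n.succ_pos, Nat.add_sub_cancel, neg_div, ← hD, ← hD]
    exact hO.geronimus_eq_add_C_mul hOh hL (hD_ne n)
  have hchr (n : ℕ) : (X - C c) * P n = Ph (n + 1) + C (beta n) * Ph n := by
    rw [hbeta]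
    exact hO.X_sub_C_mul_eq_geronimus_add_C_mul hOh hL (hPhc n)
  obtain rfl : Lh = unitLowerBidiagonal beta := funext₂ hLh
  obtain rfl : Uh = upperBidiagonal fun n => ell (n + 1) := funext₂ hUh
  refine ⟨fun i j => ?_, hrech.associated_jacobi_sub_scalar_eq_mprod hconn hchr⟩
  simpa only [hJα, momentFunctional_one] using
    hrec.corecursive_jacobi_sub_scalar_eq_mprod hOh hL hconn hchr i j
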